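/- arXiv:1809.06784 — 2 statements merged into one kernel-verified Lean document; each statement's English description precedes it below -/
import Mathlib

section
/- Let G and H be nonempty sets and J : G × H → ℝ a payoff function of a zero-sum game, where the maximizer chooses g ∈ G and the minimizer chooses h ∈ H. Fix ε > 0, and let G(Θ) ⊆ G and H(Ξ) ⊆ H be subsets (parametrized approximating classes) such that: (i) for every h ∈ H there exists h_ξ ∈ H(Ξ) with |J(g, h) − J(g, h_ξ)| ≤ ε for all g ∈ G, and (ii) for every g ∈ G there exists g_θ ∈ G(Θ) with |J(g_θ, h) − J(g, h)| ≤ ε for all h ∈ H. Then for every saddle-point equilibrium (g*, h*) of the game (i.e., J(g, h*) ≤ J(g*, h*) ≤ J(g*, h) for all g ∈ G, h ∈ H), there exists a pair (g_{θ*}, h_{ξ*}) ∈ G(Θ) × H(Ξ) that is a 3ε-Nash equilibrium of the game, i.e., J(g_{θ*}, h_{ξ*}) ≤ J(g_{θ*}, h) + 3ε for all h ∈ H, and J(g_{θ*}, h_{ξ*}) ≥ J(g, h_{ξ*}) − 3ε for all g ∈ G. -/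
/-!
Replace `gs` by an approximant that guarantees the maximizer at most `ε` less against every `h`, and
`hs` by one that concedes at most `δ` more against every `g`. Deviations of both players at once are
controlled through the old saddle point,
`J g hξ ≤ J g hs + δ ≤ J gs h + δ ≤ J gθ h + ε + δ`,
and fixing one of the deviations gives the two Nash inequalities. Going through the off-diagonal
values `J g hs` and `J gs h` costs each approximation error only once, so uniform errors `ε` already
yield a `2ε`-Nash equilibrium.
-/

section ApproxSaddlePoint

variable {G H R : Type*} [AddCommMonoid R] [Preorder R]

/-- `(a, b)` is a `δ`-Nash equilibrium of the zero-sum game `J`, whose first player maximizes.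
Both conditions are written additively so that payoffs need not admit subtraction. -/
def IsApproxNash (J : G → H → R) (δ : R) (a : G) (b : H) : Prop :=
  (∀ h, J a b ≤ J a h + δ) ∧ ∀ g, J g b ≤ J a b + δ

/-- `(a, b)` is a `δ`-saddle point of `J`, whose first player maximizes. The error `δ` bounds the
deviations of both players jointly, whereas in `IsApproxNash` it bounds each of them separately;
this is the form in which errors of successive approximations simply add up. -/
def IsApproxSaddlePoint (J : G → H → R) (δ : R) (a : G) (b : H) : Prop :=
  ∀ g h, J g b ≤ J a h + δ

variable {J : G → H → R} {δ δ' ε : R} {a a' : G} {b b' : H}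

theorem isApproxSaddlePoint_zero_iff :
    IsApproxSaddlePoint J 0 a b ↔ ∀ g h, J g b ≤ J a b ∧ J a b ≤ J a h := by
  simp only [IsApproxSaddlePoint, add_zero]
  exact ⟨fun hab g h => ⟨hab g b, hab a h⟩, fun hab g h => (hab g h).1.trans (hab g h).2⟩

theorem IsApproxSaddlePoint.isApproxNash (hab : IsApproxSaddlePoint J δ a b) :
    IsApproxNash J δ a b :=
  ⟨hab a, fun g => hab g b⟩

variable [IsOrderedAddMonoid R]

theorem IsApproxNash.mono (hab : IsApproxNash J δ a b) (hδ : δ ≤ δ') : IsApproxNash J δ' a b :=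
  ⟨fun h => (hab.1 h).trans (by gcongr), fun g => (hab.2 g).trans (by gcongr)⟩

theorem IsApproxSaddlePoint.replace_left (hab : IsApproxSaddlePoint J δ a b)
    (ha : ∀ h, J a h ≤ J a' h + ε) : IsApproxSaddlePoint J (ε + δ) a' b := fun g h =>
  calc
    J g b ≤ J a h + δ := hab g h
    _ ≤ J a' h + ε + δ := by gcongr; exact ha h
    _ = J a' h + (ε + δ) := add_assoc _ _ _

theorem IsApproxSaddlePoint.replace_right (hab : IsApproxSaddlePoint J δ a b)
    (hb : ∀ g, J g b' ≤ J g b + ε) : IsApproxSaddlePoint J (δ + ε) a b' := fun g h =>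
  calc
    J g b' ≤ J g b + ε := hb g
    _ ≤ J a h + δ + ε := by gcongr; exact hab g h
    _ = J a h + (δ + ε) := add_assoc _ _ _

theorem approx_nash_of_saddle_point_general {GΘ : Set G} {HΞ : Set H} {gs : G} {hs : H}
    (hH : ∃ hξ ∈ HΞ, ∀ g, J g hξ ≤ J g hs + δ)
    (hG : ∃ gθ ∈ GΘ, ∀ h, J gs h ≤ J gθ h + ε)
    (hsaddle : ∀ g h, J g hs ≤ J gs hs ∧ J gs hs ≤ J gs h) :
    ∃ gθ ∈ GΘ, ∃ hξ ∈ HΞ, IsApproxNash J (ε + δ) gθ hξ := by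
  obtain ⟨hξ, hξ_mem, hξ_approx⟩ := hH
  obtain ⟨gθ, gθ_mem, gθ_approx⟩ := hG
  have saddle : IsApproxSaddlePoint J 0 gs hs := isApproxSaddlePoint_zero_iff.2 hsaddle
  have saddle_approx : IsApproxSaddlePoint J (ε + δ) gθ hξ := by
    simpa only [add_zero] using (saddle.replace_left gθ_approx).replace_right hξ_approx
  exact ⟨gθ, gθ_mem, hξ, hξ_mem, saddle_approx.isApproxNash⟩

end ApproxSaddlePoint

theorem approx_nash_of_saddle_point
    {G H : Type*} [Nonempty G] [Nonempty H]
    (J : G → H → ℝ) (ε : ℝ) (hε : 0 < ε)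
    (GΘ : Set G) (HΞ : Set H)
    (hH : ∀ h : H, ∃ hξ ∈ HΞ, ∀ g : G, |J g h - J g hξ| ≤ ε)
    (hG : ∀ g : G, ∃ gθ ∈ GΘ, ∀ h : H, |J gθ h - J g h| ≤ ε)
    (gs : G) (hs : H)
    (hsaddle : ∀ g : G, ∀ h : H, J g hs ≤ J gs hs ∧ J gs hs ≤ J gs h) :
    ∃ gθ ∈ GΘ, ∃ hξ ∈ HΞ,
      (∀ h : H, J gθ hξ ≤ J gθ h + 3 * ε) ∧
      (∀ g : G, J g hξ - 3 * ε ≤ J gθ hξ) := by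
  have le_add_of_close {x y : ℝ} (hxy : |x - y| ≤ ε) : y ≤ x + ε :=
    sub_le_iff_le_add.1 (sub_le_of_abs_sub_le_left hxy)
  obtain ⟨gθ, gθ_mem, hξ, hξ_mem, nash⟩ := approx_nash_of_saddle_point_general
    ((hH hs).imp fun _ => And.imp_right fun close g => le_add_of_close (close g))
    ((hG gs).imp fun _ => And.imp_right fun close h => le_add_of_close (close h)) hsaddle
  have nash_three : IsApproxNash J (3 * ε) gθ hξ := nash.mono (by linarith)
  exact ⟨gθ, gθ_mem, hξ, hξ_mem, nash_three.1, fun g => sub_le_iff_le_add.2 (nash_three.2 g)⟩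
end

section
/- Let G and H be nonempty sets and J : G × H → ℝ, and let ε > 0. Suppose G' ⊆ G and H' ⊆ H are subsets such that for every h ∈ H there exists h' ∈ H' with |J(g, h) − J(g, h')| ≤ ε for all g ∈ G, and for every g ∈ G there exists g' ∈ G' with |J(g', h) − J(g, h)| ≤ ε for all h ∈ H. If (g*, h*) ∈ G × H is a saddle-point equilibrium of J (i.e., J(g, h*) ≤ J(g*, h*) ≤ J(g*, h) for all g ∈ G, h ∈ H), then there exist ĝ ∈ G' and ĥ ∈ H' such that for all g' ∈ G' and h' ∈ H', J(g', ĥ) − 3ε ≤ J(ĝ, ĥ) ≤ J(ĝ, h') + 3ε; that is, (ĝ, ĥ) is a 3ε-Nash equilibrium of the restricted game on G' × H'. -/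
/-!
Let `ĝ` and `ĥ` approximate the saddle-point strategies `g*` and `h*`. Then
`J g ĥ ≤ J g h* + ε ≤ J g* h + ε ≤ J ĝ h + 2 * ε` for all `g` and `h`. Taking `h = ĥ` bounds the
gain of the maximizing player from deviating, and taking `g = ĝ` that of the minimizing player, so
the constant `2 * ε` already works.
-/

section

variable {G H R : Type*} {J : G → H → R} {G' : Set G} {H' : Set H}

/-- The pair `(g, h) ∈ G' × H'` is a `δ`-Nash equilibrium of the zero-sum game with payoff `J`
restricted to `G' × H'`: no player gains more than `δ` by a unilateral deviation. The first argument
of `J` is the strategy of the maximizing player. -/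
structure IsApproxNashOn [Add R] [LE R] (δ : R) (J : G → H → R) (G' : Set G) (H' : Set H)
    (g : G) (h : H) : Prop where
  mem_left : g ∈ G'
  mem_right : h ∈ H'
  left_le_add : ∀ g' ∈ G', J g' h ≤ J g h + δ
  le_right_add : ∀ h' ∈ H', J g h ≤ J g h' + δ

namespace IsApproxNashOn

theorem mono [Add R] [Preorder R] [AddLeftMono R] {δ δ' : R} {g : G} {h : H}
    (hgh : IsApproxNashOn δ J G' H' g h) (hδ : δ ≤ δ') : IsApproxNashOn δ' J G' H' g h where
  mem_left := hgh.mem_left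
  mem_right := hgh.mem_right
  left_le_add g' hg' := (hgh.left_le_add g' hg').trans (by gcongr)
  le_right_add h' hh' := (hgh.le_right_add h' hh').trans (by gcongr)

theorem of_forall_le_add [Add R] [LE R] {δ : R} {g : G} {h : H} (hg : g ∈ G') (hh : h ∈ H')
    (hle : ∀ g' ∈ G', ∀ h' ∈ H', J g' h ≤ J g h' + δ) : IsApproxNashOn δ J G' H' g h where
  mem_left := hg
  mem_right := hh
  left_le_add g' hg' := hle g' hg' h hh
  le_right_add h' hh' := hle g hg h' hh'

end IsApproxNashOn

variable [AddSemigroup R] [Preorder R] [AddRightMono R] {gs : G} {hs : H} {α β : R}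

-- `IsSaddlePointOn` minimizes over the first argument, hence the `flip`.
theorem le_add_add_of_isSaddlePointOn {ghat : G} {hhat : H}
    (hsaddle : IsSaddlePointOn H' G' (flip J) hs gs)
    (hG : ∀ h ∈ H', J gs h ≤ J ghat h + α) (hH : ∀ g ∈ G', J g hhat ≤ J g hs + β) :
    ∀ g ∈ G', ∀ h ∈ H', J g hhat ≤ J ghat h + (α + β) := by
  intro g hg h hh
  calc
    J g hhat ≤ J g hs + β := hH g hg
    _ ≤ J gs h + β := by gcongr; exact hsaddle h hh g hg
    _ ≤ J ghat h + α + β := by gcongr; exact hG h hh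
    _ = J ghat h + (α + β) := add_assoc ..

theorem restricted_approx_nash_of_saddle_point_general
    (hsaddle : IsSaddlePointOn H' G' (flip J) hs gs)
    (hG : ∃ g' ∈ G', ∀ h ∈ H', J gs h ≤ J g' h + α)
    (hH : ∃ h' ∈ H', ∀ g ∈ G', J g h' ≤ J g hs + β) :
    ∃ ghat hhat, IsApproxNashOn (α + β) J G' H' ghat hhat := by
  obtain ⟨ghat, hghat, hG⟩ := hG
  obtain ⟨hhat, hhhat, hH⟩ := hH
  exact ⟨ghat, hhat, .of_forall_le_add hghat hhhat (le_add_add_of_isSaddlePointOn hsaddle hG hH)⟩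

end

theorem restricted_approx_nash_of_saddle_point
    {G H : Type*} [Nonempty G] [Nonempty H]
    (J : G → H → ℝ) (ε : ℝ) (hε : 0 < ε)
    (G' : Set G) (H' : Set H)
    (hH : ∀ h : H, ∃ h' ∈ H', ∀ g : G, |J g h - J g h'| ≤ ε)
    (hG : ∀ g : G, ∃ g' ∈ G', ∀ h : H, |J g' h - J g h| ≤ ε)
    (gs : G) (hs : H)
    (hsaddle : ∀ g : G, ∀ h : H, J g hs ≤ J gs hs ∧ J gs hs ≤ J gs h) :
    ∃ ghat ∈ G', ∃ hhat ∈ H',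
      ∀ g' ∈ G', ∀ h' ∈ H',
        J g' hhat - 3 * ε ≤ J ghat hhat ∧ J ghat hhat ≤ J ghat h' + 3 * ε := by
  have hsaddleOn : IsSaddlePointOn H' G' (flip J) hs gs :=
    fun h _ g _ ↦ (hsaddle g h).1.trans (hsaddle g h).2
  have hGs : ∃ g' ∈ G', ∀ h ∈ H', J gs h ≤ J g' h + ε :=
    (hG gs).imp fun g' ⟨hg', hle⟩ ↦
      ⟨hg', fun h _ ↦ sub_le_iff_le_add'.1 (abs_sub_le_iff.1 (hle h)).2⟩
  have hHs : ∃ h' ∈ H', ∀ g ∈ G', J g h' ≤ J g hs + ε :=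
    (hH hs).imp fun h' ⟨hh', hle⟩ ↦
      ⟨hh', fun g _ ↦ sub_le_iff_le_add'.1 (abs_sub_le_iff.1 (hle g)).2⟩
  obtain ⟨ghat, hhat, hnash⟩ := restricted_approx_nash_of_saddle_point_general hsaddleOn hGs hHs
  have hnash3 : IsApproxNashOn (3 * ε) J G' H' ghat hhat := hnash.mono (by linarith)
  exact ⟨ghat, hnash3.mem_left, hhat, hnash3.mem_right, fun g' hg' h' hh' ↦
    ⟨sub_le_iff_le_add.2 (hnash3.left_le_add g' hg'), hnash3.le_right_add h' hh'⟩⟩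
end
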